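/- Let λ > 0, x > 0, and c ∈ (−λ, 0). Then the function t ↦ x^{c+it} Γ(−(c+it)) Γ(λ + c + it) is Lebesgue integrable on ℝ and (1/(2π)) ∫_{−∞}^{∞} x^{c+it} Γ(−(c+it)) Γ(λ+c+it) dt = Γ(λ) (1+x)^{−λ}. (Mellin–Barnes representation of (1+x)^{−λ}: the contour is the vertical line Re u = c separating the poles of Γ(−u) from those of Γ(λ+u).) -/

import Mathlib

open MeasureTheory

/-!
By Mellin inversion it suffices to know the Mellin transform of `t ↦ (1 + t) ^ (-a)` on the line
`Re s = -c`, and its integrability there. The substitution `u = t / (1 + t)` turns the transform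
into the Beta integral `B(s, a - s) = Γ(s) Γ(a - s) / Γ(a)`. For integrability no Stirling
estimate is needed: `|s Γ(s)| = |Γ(s + 1)| ≤ Γ(Re s + 1)` shows that `Γ` decays like `1 / |s|` on
vertical lines in the right half-plane, so it is square integrable there, and the product of two
such factors is integrable.
-/

section

open Set Complex

lemma norm_Gamma_le_Gamma_re {s : ℂ} (hs : 0 < s.re) : ‖Gamma s‖ ≤ Real.Gamma s.re := by
  rw [Gamma_eq_integral hs, Real.Gamma_eq_integral hs, GammaIntegral]
  refine (norm_integral_le_integral_norm _).trans_eq (setIntegral_congr_fun measurableSet_Ioi ?_)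
  intro x hx
  simp [norm_cpow_eq_rpow_re_of_pos hx, norm_exp]

lemma norm_Gamma_le_Gamma_re_add_one_mul_norm_inv {s : ℂ} (hs : 0 < s.re) :
    ‖Gamma s‖ ≤ Real.Gamma (s.re + 1) * ‖s⁻¹‖ := by
  have hs0 : s ≠ 0 := ne_zero_of_re_pos hs
  have h : ‖Gamma (s + 1)‖ ≤ Real.Gamma (s.re + 1) := by
    simpa using norm_Gamma_le_Gamma_re (s := s + 1) (add_pos hs one_pos)
  rwa [Gamma_add_one s hs0, norm_mul, mul_comm, ← le_div_iff₀ (norm_pos_iff.2 hs0), div_eq_mul_inv,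
    ← norm_inv] at h

lemma continuous_Gamma_vertical {s : ℂ} (hs : 0 < s.re) :
    Continuous fun t : ℝ => Gamma (s + t * I) := by
  refine continuous_iff_continuousAt.2 fun t => ?_
  refine ContinuousAt.comp (g := Gamma) (continuousAt_Gamma _ fun m hm => ?_) (by fun_prop)
  have hre : s.re = -m := by simpa using congrArg re hm
  linarith [m.cast_nonneg (α := ℝ)]

lemma memLp_two_inv_vertical {s : ℂ} (hs : s.re ≠ 0) :
    MemLp (fun t : ℝ => (s + t * I)⁻¹) 2 := by
  have hne (t : ℝ) : s + t * I ≠ 0 := fun h => hs (by simpa using congrArg re h)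
  have hcont : Continuous fun t : ℝ => (s + t * I)⁻¹ := by fun_prop (disch := exact hne)
  rw [memLp_two_iff_integrable_sq_norm hcont.aestronglyMeasurable]
  have hint := ((integrable_inv_one_add_sq.comp_div hs).comp_add_left s.im).const_mul (s.re ^ 2)⁻¹
  refine hint.congr (.of_forall fun t => ?_)
  have hnormSq : ‖s + t * I‖ ^ 2 = s.re ^ 2 + (s.im + t) ^ 2 := by
    rw [← normSq_eq_norm_sq, normSq_apply]
    simp [sq]
  simp only [norm_inv, inv_pow, hnormSq]
  field_simp

lemma memLp_two_Gamma_vertical {s : ℂ} (hs : 0 < s.re) :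
    MemLp (fun t : ℝ => Gamma (s + t * I)) 2 := by
  refine (memLp_two_inv_vertical hs.ne').of_le_mul (c := Real.Gamma (s.re + 1))
    (continuous_Gamma_vertical hs).aestronglyMeasurable (.of_forall fun t => ?_)
  simpa using norm_Gamma_le_Gamma_re_add_one_mul_norm_inv (s := s + t * I) (by simpa using hs)

lemma integrable_Gamma_mul_Gamma_vertical {u v : ℂ} (hu : 0 < u.re) (hv : 0 < v.re) :
    Integrable fun t : ℝ => Gamma (u - t * I) * Gamma (v + t * I) := by
  have hneg : MemLp (fun t : ℝ => Gamma (u - t * I)) 2 := by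
    simpa [Function.comp_def, sub_eq_add_neg] using
      (memLp_two_Gamma_vertical hu).comp_measurePreserving (Measure.measurePreserving_neg volume)
  exact hneg.integrable_mul (memLp_two_Gamma_vertical hv)

lemma bijOn_div_one_add_Ioi_Ioo {K : Type*} [Field K] [LinearOrder K] [IsStrictOrderedRing K] :
    BijOn (fun t : K => t / (1 + t)) (Ioi 0) (Ioo 0 1) := by
  refine ⟨fun t (ht : 0 < t) => ?_, fun s (hs : 0 < s) t (ht : 0 < t) h => ?_, ?_⟩
  · exact ⟨by positivity, (div_lt_one (by positivity)).2 (lt_one_add t)⟩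
  · linear_combination (div_eq_div_iff (by positivity) (by positivity)).1 h
  · rintro u ⟨hu0, hu1⟩
    have hu : 0 < 1 - u := sub_pos.2 hu1
    refine ⟨u / (1 - u), div_pos hu0 hu, ?_⟩
    field_simp
    ring

lemma hasDerivAt_div_one_add {𝕜 : Type*} [NontriviallyNormedField 𝕜] {t : 𝕜} (ht : 1 + t ≠ 0) :
    HasDerivAt (fun t : 𝕜 => t / (1 + t)) ((1 + t) ^ 2)⁻¹ t := by
  convert! (hasDerivAt_id t).div ((hasDerivAt_id t).const_add 1) ht using 1
  simp

section ChangeOfVariables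

variable {E : Type*} [NormedAddCommGroup E] [NormedSpace ℝ E] (g : ℝ → E)

lemma integrableOn_Ioo_zero_one_iff_comp_div_one_add :
    IntegrableOn g (Ioo 0 1) ↔
      IntegrableOn (fun t => ((1 + t) ^ 2)⁻¹ • g (t / (1 + t))) (Ioi 0) := by
  simpa only [bijOn_div_one_add_Ioi_Ioo.image_eq, abs_inv, abs_sq] using
    integrableOn_image_iff_integrableOn_abs_deriv_smul measurableSet_Ioi
      (fun t ht => (hasDerivAt_div_one_add (add_pos one_pos ht).ne').hasDerivWithinAt)
      bijOn_div_one_add_Ioi_Ioo.injOn g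

lemma integral_Ioo_zero_one_eq_comp_div_one_add :
    ∫ u in Ioo 0 1, g u = ∫ t in Ioi 0, ((1 + t) ^ 2)⁻¹ • g (t / (1 + t)) := by
  simpa only [bijOn_div_one_add_Ioi_Ioo.image_eq, abs_inv, abs_sq] using
    integral_image_eq_integral_abs_deriv_smul measurableSet_Ioi
      (fun t ht => (hasDerivAt_div_one_add (add_pos one_pos ht).ne').hasDerivWithinAt)
      bijOn_div_one_add_Ioi_Ioo.injOn g

end ChangeOfVariables

lemma betaIntegrand_div_one_add (a s : ℂ) {t : ℝ} (ht : 0 < t) :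
    ((1 + t) ^ 2)⁻¹ • (((t / (1 + t) : ℝ) : ℂ) ^ (s - 1) *
      (1 - ((t / (1 + t) : ℝ) : ℂ)) ^ (a - s - 1)) = (t : ℂ) ^ (s - 1) • (1 + t : ℂ) ^ (-a) := by
  have hpos : 0 < 1 + t := by positivity
  have hne : ((1 + t : ℝ) : ℂ) ≠ 0 := ofReal_ne_zero.2 hpos.ne'
  have hsub : 1 - ((t / (1 + t) : ℝ) : ℂ) = ((1 + t : ℝ) : ℂ)⁻¹ := by
    push_cast at hne ⊢
    field_simp
    ring
  have hexp : ((1 + t : ℝ) : ℂ) ^ (-a) =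
      ((1 + t : ℝ) : ℂ) ^ (-(s - 1)) * ((1 + t : ℝ) : ℂ) ^ (-(a - s - 1)) *
        (((1 + t : ℝ) : ℂ) ^ 2)⁻¹ := by
    rw [← cpow_ofNat, ← cpow_neg, ← cpow_add _ _ hne, ← cpow_add _ _ hne]
    ring_nf
  rw [hsub, ofReal_div, div_cpow_ofReal_nonneg ht.le hpos.le, inv_cpow_ofReal_nonneg hpos.le,
    ← cpow_neg, div_eq_mul_inv, ← cpow_neg, real_smul, smul_eq_mul, ← ofReal_one, ← ofReal_add,
    hexp]
  push_cast
  ring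

lemma mellinConvergent_one_add_cpow_neg {a s : ℂ} (hs : 0 < s.re) (hsa : s.re < a.re) :
    MellinConvergent (fun t : ℝ => (1 + t : ℂ) ^ (-a)) s := by
  have hbeta := betaIntegral_convergent hs (v := a - s) (by simpa using hsa)
  rw [intervalIntegrable_iff_integrableOn_Ioo_of_le zero_le_one,
    integrableOn_Ioo_zero_one_iff_comp_div_one_add] at hbeta
  exact hbeta.congr_fun (fun t => betaIntegrand_div_one_add a s) measurableSet_Ioi

lemma mellin_one_add_cpow_neg (a s : ℂ) :
    mellin (fun t : ℝ => (1 + t : ℂ) ^ (-a)) s = betaIntegral s (a - s) := by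
  rw [betaIntegral, intervalIntegral.integral_of_le zero_le_one, integral_Ioc_eq_integral_Ioo,
    integral_Ioo_zero_one_eq_comp_div_one_add]
  exact (setIntegral_congr_fun measurableSet_Ioi fun t => betaIntegrand_div_one_add a s).symm

lemma Gamma_mul_mellin_one_add_cpow_neg {a s : ℂ} (hs : 0 < s.re) (hsa : s.re < a.re) :
    Gamma a * mellin (fun t : ℝ => (1 + t : ℂ) ^ (-a)) s = Gamma s * Gamma (a - s) := by
  rw [mellin_one_add_cpow_neg, Gamma_mul_Gamma_eq_betaIntegral hs (by simpa using hsa),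
    add_sub_cancel]

lemma verticalIntegrable_mellin_one_add_cpow_neg {a : ℂ} {σ : ℝ} (hσ : 0 < σ) (hσa : σ < a.re) :
    VerticalIntegrable (mellin fun t : ℝ => (1 + t : ℂ) ^ (-a)) σ := by
  have ha : Gamma a ≠ 0 := Gamma_ne_zero_of_re_pos (hσ.trans hσa)
  refine (integrable_const_mul_iff ha.isUnit _).1 ?_
  have hGamma := integrable_Gamma_mul_Gamma_vertical (u := a - σ) (v := σ)
    (by simpa using hσa) (by simpa using hσ)
  refine hGamma.congr (.of_forall fun t => ?_)
  dsimp only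
  rw [Gamma_mul_mellin_one_add_cpow_neg (by simpa using hσ) (by simpa using hσa), mul_comm,
    sub_sub]

lemma mellinInv_neg_eq_integral {E : Type*} [NormedAddCommGroup E] [NormedSpace ℂ E]
    (c : ℝ) (F : ℂ → E) (x : ℝ) :
    mellinInv (-c) F x =
      (1 / (2 * Real.pi)) • ∫ t : ℝ, (x : ℂ) ^ ((c : ℂ) + t * I) • F (-((c : ℂ) + t * I)) := by
  rw [mellinInv, ← integral_neg_eq_self]
  simp [neg_add_rev, add_comm]

lemma mellinInv_mellin_one_add_cpow_neg {a : ℂ} {σ x : ℝ} (hσ : 0 < σ) (hσa : σ < a.re)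
    (hx : 0 < x) :
    mellinInv σ (mellin fun t : ℝ => (1 + t : ℂ) ^ (-a)) x = (1 + x : ℂ) ^ (-a) := by
  refine mellinInv_mellin_eq σ (fun t : ℝ => (1 + t : ℂ) ^ (-a)) hx
    (mellinConvergent_one_add_cpow_neg hσ hσa)
    (verticalIntegrable_mellin_one_add_cpow_neg hσ hσa) ?_
  have hslit : (1 + x : ℂ) ∈ slitPlane := by
    exact_mod_cast ofReal_mem_slitPlane.2 (add_pos one_pos hx)
  exact ContinuousAt.cpow (by fun_prop) continuousAt_const hslit

lemma integrable_cpow_vertical_smul {E : Type*} [NormedAddCommGroup E] [NormedSpace ℂ E]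
    {f : ℝ → E} (hf : Integrable f) {x : ℝ} (hx : 0 < x) (s : ℂ) :
    Integrable fun t : ℝ => (x : ℂ) ^ (s + t * I) • f t := by
  have hcont : Continuous fun t : ℝ => (x : ℂ) ^ (s + t * I) :=
    Continuous.const_cpow (by fun_prop) (.inl (ofReal_ne_zero.2 hx.ne'))
  refine hf.bdd_smul (x ^ s.re) hcont.aestronglyMeasurable (.of_forall fun t => ?_)
  simp [norm_cpow_eq_rpow_re_of_pos hx]

theorem mellin_barnes_one_add_rpow_general (a : ℂ) {x c : ℝ} (hx : 0 < x) (hc : c < 0)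
    (hac : -a.re < c) :
    Integrable (fun t : ℝ =>
      (x : ℂ) ^ ((c : ℂ) + t * I) * Gamma (-((c : ℂ) + t * I)) * Gamma (a + c + t * I)) ∧
    (1 / (2 * Real.pi) : ℂ) *
        ∫ t : ℝ, (x : ℂ) ^ ((c : ℂ) + t * I) * Gamma (-((c : ℂ) + t * I)) * Gamma (a + c + t * I)
      = Gamma a * (1 + x : ℂ) ^ (-a) := by
  have hmellin (t : ℝ) : Gamma (-((c : ℂ) + t * I)) * Gamma (a + c + t * I) =
      Gamma a * mellin (fun y : ℝ => (1 + y : ℂ) ^ (-a)) (-((c : ℂ) + t * I)) := by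
    rw [Gamma_mul_mellin_one_add_cpow_neg (by simpa using hc) (by simp; linarith), sub_neg_eq_add,
      add_assoc]
  simp_rw [mul_assoc]
  constructor
  · refine integrable_cpow_vertical_smul ?_ hx c
    simpa only [neg_add'] using integrable_Gamma_mul_Gamma_vertical (u := -c) (v := a + c)
      (by simpa using hc) (by simp; linarith)
  · simp_rw [hmellin, mul_left_comm _ (Gamma a), integral_const_mul]
    rw [← mellinInv_mellin_one_add_cpow_neg (neg_pos.2 hc) (neg_lt.1 hac) hx,
      mellinInv_neg_eq_integral]
    simp [mul_left_comm]

end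

/-- Mellin–Barnes representation of `(1+x)^{-λ}`: for `λ > 0`, `x > 0` and a
vertical contour `Re u = c` with `c ∈ (-λ, 0)` separating the poles of `Γ(-u)`
from those of `Γ(λ+u)`,
`(1/(2π)) ∫_{-∞}^∞ x^{c+it} Γ(-(c+it)) Γ(λ+c+it) dt = Γ(λ) (1+x)^{-λ}`. -/
theorem mellin_barnes_one_add_rpow (lam x c : ℝ) (hlam : 0 < lam) (hx : 0 < x)
    (hc0 : c < 0) (hcl : -lam < c) :
    Integrable (fun t : ℝ =>
      (x : ℂ) ^ ((c : ℂ) + t * Complex.I) *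
        Complex.Gamma (-((c : ℂ) + t * Complex.I)) *
        Complex.Gamma ((lam : ℂ) + (c : ℂ) + t * Complex.I)) ∧
    (1 / (2 * Real.pi) : ℂ) *
        ∫ t : ℝ, (x : ℂ) ^ ((c : ℂ) + t * Complex.I) *
          Complex.Gamma (-((c : ℂ) + t * Complex.I)) *
          Complex.Gamma ((lam : ℂ) + (c : ℂ) + t * Complex.I)
      = (Real.Gamma lam : ℂ) * ((1 + x : ℝ) ^ (-lam) : ℝ) := by
  simpa [Complex.Gamma_ofReal, Complex.ofReal_cpow (by positivity : 0 ≤ 1 + x)] using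
    mellin_barnes_one_add_rpow_general lam hx hc0 (by simpa using hcl)
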